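/- Let f_ρ, f_π : U → (0,∞) be continuous probability densities w.r.t. μ, and set ρ := f_ρ·μ, π := f_π·μ. Then: (1) the Knothe–Rosenblatt transport T = (T_j)_{j∈ℕ} : U → U, defined componentwise via the conditional CDFs, is bijective, Borel measurable, and T_♯ρ = π; (2) the products ∏_{j=1}^n ∂_{x_j}T_j(x_{[j]}) converge uniformly on U as n → ∞ to a continuous positive function det dT : U → (0,∞), and f_π(T(x))·det dT(x) = f_ρ(x) for all x ∈ U. -/

import Mathlib

open Set MeasureTheory Filter

/-- The uniform probability measure `μ₁` on `[-1,1]` (half of Lebesgue measure). -/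
noncomputable def mu1 : Measure ℝ :=
  (2 : ENNReal)⁻¹ • (volume.restrict (Set.Icc (-1 : ℝ) 1))

/-- The infinite-dimensional cube `U = [-1,1]^ℕ`, realized inside `ℕ → ℝ`. -/
def cubeInf : Set (ℕ → ℝ) := {x | ∀ i, x i ∈ Set.Icc (-1 : ℝ) 1}

/-- `μ` is the countable product `⨂_{i∈ℕ} μ₁`, characterized through its values on
finite-dimensional cylinder sets. -/
def IsProductOfMu1 (μ : Measure (ℕ → ℝ)) : Prop :=
  IsProbabilityMeasure μ ∧
    ∀ s : ℕ → Set ℝ, (∀ i, MeasurableSet (s i)) → ∀ n : ℕ,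
      μ {x | ∀ i < n, x i ∈ s i} = ∏ i ∈ Finset.range n, mu1 (s i)

/-- The marginal `f̂_k(x) = ∫_U f(x_{[k]}, t) dμ(t)`. -/
noncomputable def hatInf (μ : Measure (ℕ → ℝ)) (f : (ℕ → ℝ) → ℝ) (k : ℕ) (x : ℕ → ℝ) : ℝ :=
  ∫ t : ℕ → ℝ, f (fun i => if i < k then x i else t i) ∂μ

/-- The conditional CDF `F_{f;k}(x_{[k-1]}, x_k) = ∫_{-1}^{x_k} (f̂_k/f̂_{k-1}) dμ₁`
(the component `k = j+1` being indexed by `j : ℕ`). -/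
noncomputable def FCDFInf (μ : Measure (ℕ → ℝ)) (f : (ℕ → ℝ) → ℝ) (j : ℕ) (x : ℕ → ℝ) : ℝ :=
  (∫ t in Set.Icc (-1 : ℝ) (x j), hatInf μ f (j + 1) (Function.update x j t) ∂mu1) /
    hatInf μ f j x

/-- `∂_{x_j} T_j` (one-sided at the endpoints of `[-1,1]`). -/
noncomputable def pdInf (T : ℕ → (ℕ → ℝ) → ℝ) (j : ℕ) (x : ℕ → ℝ) : ℝ :=
  derivWithin (fun t => T j (Function.update x j t)) (Set.Icc (-1 : ℝ) 1) (x j)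

open Topology

set_option linter.unusedSectionVars false

section KR

instance mu1_prob : IsProbabilityMeasure mu1 := by
  constructor
  simp only [mu1, Measure.smul_apply, Measure.restrict_apply MeasurableSet.univ, univ_inter,
    Real.volume_Icc, smul_eq_mul]
  norm_num
  exact ENNReal.inv_mul_cancel (by norm_num) (by norm_num)

lemma mu1_Icc : mu1 (Icc (-1) 1) = 1 := by
  simp only [mu1, Measure.smul_apply, Measure.restrict_apply measurableSet_Icc, inter_self,
    Real.volume_Icc, smul_eq_mul]
  norm_num
  exact ENNReal.inv_mul_cancel (by norm_num) (by norm_num)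

lemma setint_mu1 (g : ℝ → ℝ) {s : ℝ} (hs : s ∈ Icc (-1 : ℝ) 1) :
    ∫ t in Icc (-1 : ℝ) s, g t ∂mu1 = (1 / 2) * ∫ t in (-1 : ℝ)..s, g t := by
  rw [mu1, Measure.restrict_smul, integral_smul_measure, Measure.restrict_restrict measurableSet_Icc,
    inter_eq_left.2 (Icc_subset_Icc_right hs.2), intervalIntegral.integral_of_le hs.1,
    integral_Icc_eq_integral_Ioc]
  simp

lemma int_mu1 (g : ℝ → ℝ) :
    ∫ t, g t ∂mu1 = (1 / 2) * ∫ t in (-1 : ℝ)..1, g t := by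
  rw [mu1, integral_smul_measure, intervalIntegral.integral_of_le (by norm_num),
    integral_Icc_eq_integral_Ioc]
  simp

lemma mu_eq {μ : Measure (ℕ → ℝ)} (hμ : IsProductOfMu1 μ) :
    μ = Measure.infinitePi (fun _ : ℕ => mu1) := by
  apply Measure.eq_infinitePi
  intro s t ht
  classical
  obtain ⟨n, hn⟩ : ∃ n, s ⊆ Finset.range n := s.exists_nat_subset_range
  have h := hμ.2 (fun i => if i ∈ s then t i else univ) (fun i => by
    split_ifs; exacts [ht i, MeasurableSet.univ]) n
  have e : {x : ℕ → ℝ | ∀ i < n, x i ∈ (if i ∈ s then t i else univ)} = Set.pi (s : Set ℕ) t := by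
    ext x
    simp only [mem_ofPred_eq, Set.mem_pi, Finset.mem_coe]
    constructor
    · intro h i hi
      have := h i (Finset.mem_range.1 (hn hi))
      simpa [hi] using this
    · intro h i _
      split_ifs with hi
      · exact h i hi
      · trivial
  rw [e] at h
  rw [h, ← Finset.prod_subset hn]
  · exact Finset.prod_congr rfl fun i hi => by simp [hi]
  · intro i _ hi
    simp [hi]

lemma ae_cube {μ : Measure (ℕ → ℝ)} (hμ : IsProductOfMu1 μ) : ∀ᵐ x ∂μ, x ∈ cubeInf := by
  have := hμ.1
  have : ∀ᵐ x ∂μ, ∀ i, x i ∈ Icc (-1 : ℝ) 1 := by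
    rw [ae_all_iff]
    intro i
    have h := hμ.2 (fun _ => Icc (-1) 1) (fun _ => measurableSet_Icc) (i+1)
    simp only [mu1_Icc, Finset.prod_const_one] at h
    have hm : MeasurableSet {x : ℕ → ℝ | ∀ j < i+1, x j ∈ Icc (-1 : ℝ) 1} := by
      have : {x : ℕ → ℝ | ∀ j < i+1, x j ∈ Icc (-1 : ℝ) 1} =
        Set.pi (Set.Iio (i+1)) (fun _ => Icc (-1 : ℝ) 1) := by ext; simp [Set.mem_pi]
      rw [this]
      exact MeasurableSet.pi (Set.to_countable _) (fun _ _ => measurableSet_Icc)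
    have h2 := (mem_ae_iff_prob_eq_one (μ := μ) hm).2 h
    filter_upwards [h2] with x hx
    exact hx i (Nat.lt_succ_self i)
  exact this

lemma meas_update (k : ℕ) :
    Measurable (fun p : (ℕ → ℝ) × ℝ => Function.update p.1 k p.2) := by
  apply Continuous.measurable
  fun_prop

lemma map_update {μ : Measure (ℕ → ℝ)} (hμ : IsProductOfMu1 μ) (k : ℕ) :
    (μ.prod mu1).map (fun p : (ℕ → ℝ) × ℝ => Function.update p.1 k p.2) = μ := by
  have := hμ.1
  conv_rhs => rw [mu_eq hμ]
  apply Measure.eq_infinitePi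
  intro s t ht
  classical
  rw [Measure.map_apply (meas_update k) (MeasurableSet.pi (Set.to_countable _) fun i _ => ht i)]
  have e : (fun p : (ℕ → ℝ) × ℝ => Function.update p.1 k p.2) ⁻¹' (Set.pi (s : Set ℕ) t) =
     (Set.pi ((s.erase k : Finset ℕ) : Set ℕ) t) ×ˢ (if k ∈ s then t k else univ) := by
    ext ⟨x, r⟩
    simp only [mem_preimage, Set.mem_pi, Finset.mem_coe, mem_prod, Finset.mem_erase]
    constructor
    · intro h
      refine ⟨fun i hi => by simpa [hi.1] using h i hi.2, ?_⟩
      split_ifs with hk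
      · simpa using h k hk
      · trivial
    · rintro ⟨h1, h2⟩ i hi
      by_cases hik : i = k
      · subst hik
        simpa [hi] using h2
      · simpa [hik] using h1 i ⟨hik, hi⟩
  rw [e, Measure.prod_prod, mu_eq hμ, Measure.infinitePi_pi _ (fun i _ => ht i)]
  split_ifs with hk
  · exact Finset.prod_erase_mul _ _ hk
  · rw [Finset.erase_eq_of_notMem hk]; simp

lemma int_update {μ : Measure (ℕ → ℝ)} (hμ : IsProductOfMu1 μ) (k : ℕ) {g : (ℕ → ℝ) → ℝ}
    (hg : Continuous g) {C : ℝ} (hC : ∀ x, |g x| ≤ C) :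
    ∫ x, ∫ s, g (Function.update x k s) ∂mu1 ∂μ = ∫ x, g x ∂μ := by
  have := hμ.1
  conv_rhs => rw [← map_update hμ k]
  rw [integral_map (meas_update k).aemeasurable hg.aestronglyMeasurable, integral_prod]
  refine Integrable.of_bound (C := C) ?_ (Eventually.of_forall fun x => hC _)
  exact (hg.measurable.comp (meas_update k)).aestronglyMeasurable

lemma int_update' {μ : Measure (ℕ → ℝ)} (hμ : IsProductOfMu1 μ) (k : ℕ) {g : (ℕ → ℝ) → ℝ}
    (hg : Continuous g) {C : ℝ} (hC : ∀ x, |g x| ≤ C) :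
    ∫ s, ∫ x, g (Function.update x k s) ∂μ ∂mu1 = ∫ x, g x ∂μ := by
  have := hμ.1
  conv_rhs => rw [← map_update hμ k]
  rw [integral_map (meas_update k).aemeasurable hg.aestronglyMeasurable, integral_prod_symm]
  refine Integrable.of_bound (C := C) ?_ (Eventually.of_forall fun x => hC _)
  exact (hg.measurable.comp (meas_update k)).aestronglyMeasurable

/-- nice functions -/
structure KNice (f : (ℕ → ℝ) → ℝ) (m M : ℝ) : Prop where
  uc : UniformContinuous f
  mpos : 0 < m
  lo : ∀ x, m ≤ f x
  hi : ∀ x, f x ≤ M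

lemma KNice.abs {f m M} (h : KNice f m M) (x) : |f x| ≤ M := by
  rw [abs_le]; constructor <;> linarith [h.lo x, h.hi x, h.mpos]

lemma cont_splice (k : ℕ) : Continuous
    (fun p : (ℕ → ℝ) × (ℕ → ℝ) => (fun i => if i < k then p.1 i else p.2 i : ℕ → ℝ)) := by
  refine continuous_pi fun i => ?_
  split_ifs <;> fun_prop

variable {μ : Measure (ℕ → ℝ)} (hμ : IsProductOfMu1 μ) {f p : (ℕ → ℝ) → ℝ} {m M m' M' : ℝ}
  (hf : KNice f m M) (hp : KNice p m' M')

include hμ hf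

lemma hat_integrable (k : ℕ) (x : ℕ → ℝ) :
    Integrable (fun t : ℕ → ℝ => f (fun i => if i < k then x i else t i)) μ := by
  have := hμ.1
  refine Integrable.of_bound (C := M) ?_ (Eventually.of_forall fun t => hf.abs _)
  apply Continuous.aestronglyMeasurable
  exact hf.uc.continuous.comp ((cont_splice k).comp (Continuous.prodMk_right x))

lemma hat_cont (k : ℕ) : Continuous (hatInf μ f k) := by
  have := hμ.1
  refine continuous_of_dominated (bound := fun _ => M) ?_ ?_ (integrable_const _) ?_
  · intro x; exact (hat_integrable hμ hf k x).1
  · intro x; exact Eventually.of_forall fun t => hf.abs _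
  · refine Eventually.of_forall fun t => ?_
    exact hf.uc.continuous.comp ((cont_splice k).comp (Continuous.prodMk_left t))

lemma hat_lo (k : ℕ) (x) : m ≤ hatInf μ f k x := by
  have := hμ.1
  have := integral_mono (integrable_const m) (hat_integrable hμ hf k x) (fun t => hf.lo _)
  simpa [hatInf] using this

lemma hat_hi (k : ℕ) (x) : hatInf μ f k x ≤ M := by
  have := hμ.1
  have := integral_mono (hat_integrable hμ hf k x) (integrable_const M) (fun t => hf.hi _)
  simpa [hatInf] using this

lemma hat_pos (k : ℕ) (x) : 0 < hatInf μ f k x := hf.mpos.trans_le (hat_lo hμ hf k x)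

lemma hat_abs (k : ℕ) (x) : |hatInf μ f k x| ≤ M := by
  rw [abs_of_pos (hat_pos hμ hf k x)]; exact hat_hi hμ hf k x

omit hμ hf in
lemma hat_dep (k : ℕ) {x y : ℕ → ℝ} (h : ∀ i < k, x i = y i) :
    hatInf μ f k x = hatInf μ f k y := by
  unfold hatInf
  congr 1
  ext t
  congr 1
  ext i
  split_ifs with hi
  · exact h i hi
  · rfl

lemma hat_step (k : ℕ) (x) :
    ∫ s, hatInf μ f (k+1) (Function.update x k s) ∂mu1 = hatInf μ f k x := by
  unfold hatInf
  rw [← int_update' hμ k (g := fun t => f (fun i => if i < k then x i else t i)) _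
    (fun t => hf.abs _)]
  · congr 1
    ext s
    congr 1
    ext t
    congr 1
    ext i
    rcases lt_trichotomy i k with h | h | h
    · simp [h, h.ne, Nat.lt_succ_of_lt h]
    · simp [h]
    · simp [h.ne', not_lt.2 h.le, not_lt.2 (Nat.succ_le_of_lt h)]
  · exact hf.uc.continuous.comp ((cont_splice k).comp (Continuous.prodMk_right x))

lemma hat_unif : TendstoUniformly (fun n x => hatInf μ f n x) f atTop := by
  have := hμ.1
  have h1 : TendstoUniformly (fun (n : ℕ) (q : (ℕ → ℝ) × (ℕ → ℝ)) =>
      (fun i => if i < n then q.1 i else q.2 i : ℕ → ℝ)) (fun q => q.1) atTop := by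
    rw [tendstoUniformly_iff_tendsto, Pi.uniformity, tendsto_iInf]
    intro i
    rw [tendsto_comap_iff]
    have : ∀ᶠ (z : ℕ × ((ℕ → ℝ) × (ℕ → ℝ))) in atTop ×ˢ ⊤, i < z.1 :=
      tendsto_fst.eventually (eventually_gt_atTop i)
    intro S hS
    rw [mem_map]
    filter_upwards [this] with z hz
    simp only [Function.comp, mem_preimage, hz, if_true]
    exact refl_mem_uniformity hS
  have h2 := hf.uc.comp_tendstoUniformly h1
  rw [Metric.tendstoUniformly_iff] at h2 ⊢
  intro ε hε
  filter_upwards [h2 (ε/2) (half_pos hε)] with n hn x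
  have : ∀ t : ℕ → ℝ, |f x - f (fun i => if i < n then x i else t i)| ≤ ε/2 := by
    intro t
    have := hn (x, t)
    rw [Real.dist_eq] at this
    exact this.le
  have e : f x - hatInf μ f n x = ∫ t, (f x - f (fun i => if i < n then x i else t i)) ∂μ := by
    rw [integral_sub (integrable_const _) (hat_integrable hμ hf n x)]
    simp [hatInf]
  rw [Real.dist_eq, e]
  have := norm_integral_le_of_norm_le_const (μ := μ) (C := ε/2)
    (f := fun t => (f x - f (fun i => if i < n then x i else t i))) (Eventually.of_forall this)
  simp at this
  linarith

omit hμ hf in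
lemma upd_dep {j : ℕ} {x y : ℕ → ℝ} (h : ∀ i < j, x i = y i) (s : ℝ) :
    ∀ i < j + 1, Function.update x j s i = Function.update y j s i := by
  intro i hi
  by_cases hij : i = j
  · subst hij; simp
  · simp [hij, h i (by omega)]

/-- conditional CDF with separate last variable -/
noncomputable def Gc (μ : Measure (ℕ → ℝ)) (f : (ℕ → ℝ) → ℝ) (j : ℕ) (x : ℕ → ℝ) (s : ℝ) : ℝ :=
  ((1 / 2) * ∫ t in (-1 : ℝ)..s, hatInf μ f (j + 1) (Function.update x j t)) / hatInf μ f j x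

omit hμ hf in
lemma FCDF_eq (j : ℕ) (x : ℕ → ℝ) (hx : x j ∈ Icc (-1 : ℝ) 1) :
    FCDFInf μ f j x = Gc μ f j x (x j) := by
  unfold FCDFInf Gc
  rw [setint_mu1 _ hx]

omit hμ hf in
lemma Gc_dep {j : ℕ} {x y : ℕ → ℝ} (h : ∀ i < j, x i = y i) (s : ℝ) :
    Gc μ f j x s = Gc μ f j y s := by
  unfold Gc
  rw [hat_dep j h]
  congr 2
  congr 1
  ext t
  exact hat_dep (j+1) (upd_dep h t)

lemma slice_cont (j : ℕ) (x : ℕ → ℝ) :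
    Continuous (fun t => hatInf μ f (j + 1) (Function.update x j t)) :=
  (hat_cont hμ hf (j+1)).comp (by fun_prop)

lemma Gc_deriv (j : ℕ) (x : ℕ → ℝ) (s : ℝ) :
    HasStrictDerivAt (Gc μ f j x)
      (((1 / 2) * hatInf μ f (j + 1) (Function.update x j s)) / hatInf μ f j x) s := by
  have h := intervalIntegral.integral_hasStrictDerivAt_right
    ((slice_cont hμ hf j x).intervalIntegrable (-1) s)
    ((slice_cont hμ hf j x).stronglyMeasurableAtFilter _ _) (slice_cont hμ hf j x).continuousAt
  exact (h.const_mul (1/2)).div_const _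

lemma Gc_dpos (j : ℕ) (x : ℕ → ℝ) (s : ℝ) :
    0 < ((1 / 2) * hatInf μ f (j + 1) (Function.update x j s)) / hatInf μ f j x :=
  div_pos (mul_pos (by norm_num) (hat_pos hμ hf _ _)) (hat_pos hμ hf _ _)

lemma Gc_mono (j : ℕ) (x : ℕ → ℝ) : StrictMono (Gc μ f j x) := by
  apply strictMono_of_hasDerivAt_pos (fun s => (Gc_deriv hμ hf j x s).hasDerivAt)
  exact fun s => Gc_dpos hμ hf j x s

omit hμ hf in
lemma Gc_neg (j : ℕ) (x : ℕ → ℝ) : Gc μ f j x (-1) = 0 := by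
  simp [Gc]

lemma Gc_one (j : ℕ) (x : ℕ → ℝ) : Gc μ f j x 1 = 1 := by
  unfold Gc
  rw [← int_mu1, hat_step hμ hf]
  exact div_self (hat_pos hμ hf _ _).ne'

lemma Gc_cont (j : ℕ) : Continuous (fun q : (ℕ → ℝ) × ℝ => Gc μ f j q.1 q.2) := by
  unfold Gc
  refine Continuous.div (continuous_const.mul ?_) ((hat_cont hμ hf j).comp continuous_fst)
    (fun q => (hat_pos hμ hf _ _).ne')
  have e : ∀ q : (ℕ → ℝ) × ℝ,
      ∫ t in (-1 : ℝ)..q.2, hatInf μ f (j + 1) (Function.update q.1 j t) =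
      (q.2 + 1) * ∫ u in (0 : ℝ)..1,
        hatInf μ f (j + 1) (Function.update q.1 j (-1 + (q.2 + 1) * u)) := by
    intro q
    have := intervalIntegral.smul_integral_comp_add_mul (a := 0) (b := 1)
      (fun t => hatInf μ f (j + 1) (Function.update q.1 j t)) (q.2 + 1) (-1)
    rw [smul_eq_mul] at this
    rw [this]
    congr 1 <;> ring
  simp_rw [e]
  refine Continuous.mul (by fun_prop) ?_
  refine intervalIntegral.continuous_of_dominated_interval (bound := fun _ => M) ?_ ?_ ?_ ?_
  · intro q
    apply Continuous.aestronglyMeasurable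
    exact (hat_cont hμ hf (j+1)).comp (by fun_prop)
  · intro q
    exact Eventually.of_forall fun t _ => hat_abs hμ hf _ _
  · exact intervalIntegrable_const
  · refine Eventually.of_forall fun t _ => ?_
    exact (hat_cont hμ hf (j+1)).comp (by fun_prop)

/-- coordinatewise clamp to the cube -/
noncomputable def clampU (x : ℕ → ℝ) : ℕ → ℝ := fun i => max (-1) (min 1 (x i))

omit hμ hf in
lemma clamp_mem (x : ℕ → ℝ) : clampU x ∈ cubeInf := by
  intro i
  simp only [clampU, mem_Icc]
  exact ⟨le_max_left _ _, max_le (by norm_num) (min_le_left _ _)⟩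

omit hμ hf in
lemma clamp_eq {x : ℕ → ℝ} (hx : x ∈ cubeInf) : clampU x = x := by
  ext i
  have := hx i
  simp [clampU, this.1, this.2]

omit hμ hf in
lemma clamp_cont : Continuous clampU := by
  unfold clampU
  fun_prop

omit hμ hf in
lemma upd_mem {x : ℕ → ℝ} (hx : x ∈ cubeInf) (j : ℕ) {s : ℝ} (hs : s ∈ Icc (-1 : ℝ) 1) :
    Function.update x j s ∈ cubeInf := by
  intro i
  by_cases h : i = j
  · subst h; simpa using hs
  · simpa [h] using hx i

omit hμ hf in
lemma upd_lt {x : ℕ → ℝ} {j i : ℕ} (s : ℝ) (h : i < j) : Function.update x j s i = x i := by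
  simp [h.ne]

omit hμ hf in
lemma cube_compact : IsCompact cubeInf := by
  have : cubeInf = Set.pi univ (fun _ : ℕ => Icc (-1 : ℝ) 1) := by
    ext x; simp only [cubeInf, mem_ofPred_eq, Set.mem_pi, mem_univ, true_imp_iff]
  rw [this]
  exact isCompact_univ_pi fun _ => isCompact_Icc

variable {S : ℕ → (ℕ → ℝ) → ℝ}
    (hSmem : ∀ j : ℕ, ∀ x, S j x ∈ Icc (-1 : ℝ) 1)
    (hSdep : ∀ j : ℕ, ∀ x y : ℕ → ℝ, (∀ i ≤ j, x i = y i) → S j x = S j y)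
    (hScdf : ∀ j : ℕ, ∀ x,
      Gc μ p j (fun i => S i x) (S j x) = Gc μ f j (clampU x) (clampU x j))

include hp hScdf
lemma S_cont (j : ℕ) : Continuous (S j) := by
  induction j using Nat.strong_induction_on with
  | _ j ih =>
    set Y : (ℕ → ℝ) → (ℕ → ℝ) := fun x i => if i < j then S i x else 0 with hY
    have hYc : Continuous Y := by
      refine continuous_pi fun i => ?_
      by_cases h : i < j
      · simpa [hY, h] using ih i h
      · simp [hY, h, continuous_const]
    have hYe : ∀ x s, Gc μ p j (fun i => S i x) s = Gc μ p j (Y x) s := fun x s =>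
      Gc_dep (fun i hi => by simp [hY, hi]) s
    have hΦ : ∀ s, Continuous (fun x => Gc μ p j (Y x) s) := fun s =>
      (Gc_cont hμ hp j).comp (hYc.prodMk continuous_const)
    have hΨ : Continuous (fun x => Gc μ f j (clampU x) (clampU x j)) :=
      (Gc_cont hμ hf j).comp (clamp_cont.prodMk ((continuous_apply j).comp clamp_cont))
    have heq : ∀ x, Gc μ p j (Y x) (S j x) = Gc μ f j (clampU x) (clampU x j) := fun x => by
      rw [← hYe, hScdf]
    rw [continuous_iff_continuousAt]
    intro x0
    rw [ContinuousAt, tendsto_order]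
    constructor
    · intro a ha
      have h1 : Gc μ p j (Y x0) a < Gc μ f j (clampU x0) (clampU x0 j) := by
        rw [← heq]; exact Gc_mono hμ hp j _ ha
      filter_upwards [(hΦ a).continuousAt.eventually_lt hΨ.continuousAt h1] with x hx
      rw [← heq] at hx
      exact (Gc_mono hμ hp j _).lt_iff_lt.1 hx
    · intro a ha
      have h1 : Gc μ f j (clampU x0) (clampU x0 j) < Gc μ p j (Y x0) a := by
        rw [← heq]; exact Gc_mono hμ hp j _ ha
      filter_upwards [hΨ.continuousAt.eventually_lt (hΦ a).continuousAt h1] with x hx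
      rw [← heq] at hx
      exact (Gc_mono hμ hp j _).lt_iff_lt.1 hx

lemma S_contAll : Continuous (fun x j => S j x) :=
  continuous_pi fun j => S_cont hμ hf hp hScdf j

omit hμ hf hp
include hSdep

lemma S_slice {x : ℕ → ℝ} (hx : x ∈ cubeInf) (j : ℕ) {s : ℝ} (hs : s ∈ Icc (-1 : ℝ) 1) :
    Gc μ p j (fun i => S i x) (S j (Function.update x j s)) = Gc μ f j x s := by
  have h := hScdf j (Function.update x j s)
  rw [clamp_eq (upd_mem hx j hs), Function.update_self] at h
  rw [Gc_dep (y := fun i => S i (Function.update x j s)), h]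
  · exact Gc_dep (fun i hi => upd_lt s hi) s
  · intro i hi
    exact hSdep i _ _ fun k hk => (upd_lt s (by omega)).symm

include hμ hf hp
lemma S_neg {x : ℕ → ℝ} (hx : x ∈ cubeInf) (j : ℕ) : S j (Function.update x j (-1)) = -1 := by
  apply (Gc_mono hμ hp j (fun i => S i x)).injective
  rw [S_slice hSdep hScdf hx j (by norm_num), Gc_neg, Gc_neg]

lemma S_one {x : ℕ → ℝ} (hx : x ∈ cubeInf) (j : ℕ) : S j (Function.update x j 1) = 1 := by
  apply (Gc_mono hμ hp j (fun i => S i x)).injective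
  rw [S_slice hSdep hScdf hx j (by norm_num), Gc_one hμ hf, Gc_one hμ hp]

/-- the derivative -/
noncomputable def Dd (μ : Measure (ℕ → ℝ)) (f p : (ℕ → ℝ) → ℝ) (S : ℕ → (ℕ → ℝ) → ℝ) (j : ℕ)
    (x : ℕ → ℝ) : ℝ :=
  (hatInf μ f (j+1) x / hatInf μ f j x) *
    (hatInf μ p j (fun i => S i x) / hatInf μ p (j+1) (fun i => S i x))

lemma S_deriv {x : ℕ → ℝ} (hx : x ∈ cubeInf) (j : ℕ) :
    HasDerivWithinAt (fun t => S j (Function.update x j t)) (Dd μ f p S j x)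
      (Icc (-1) 1) (x j) := by
  have hΦ := Gc_deriv hμ hp j (fun i => S i x) (S j x)
  have hne := (Gc_dpos hμ hp j (fun i => S i x) (S j x)).ne'
  have hu : Function.update (fun i => S i x) j (S j x) = fun i => S i x :=
    Function.update_eq_self j (fun i => S i x)
  rw [hu] at hΦ hne
  have hΨ := (Gc_deriv hμ hf j x (x j)).hasDerivAt
  rw [Function.update_eq_self] at hΨ
  have hslice : Gc μ p j (fun i => S i x) (S j x) = Gc μ f j x (x j) := by
    have := S_slice hSdep hScdf hx j (hx j)
    rwa [Function.update_eq_self] at this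
  have hinv := (hΦ.to_localInverse hne).hasDerivAt
  rw [hslice] at hinv
  have hcomp := (hinv.comp (x j) hΨ).hasDerivWithinAt (s := Icc (-1) 1)
  have hc : ContinuousAt (fun t => S j (Function.update x j t)) (x j) := by
    apply Continuous.continuousAt
    exact (S_cont hμ hf hp hScdf j).comp (by fun_prop)
  have hc2 : Tendsto (fun t => S j (Function.update x j t)) (𝓝 (x j)) (𝓝 (S j x)) := by
    have := hc.tendsto
    rwa [Function.update_eq_self] at this
  have hev := hc2.eventually (hΦ.eventually_left_inverse hne)
  have hfin := hcomp.congr_of_eventuallyEq_of_mem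
    (f₁ := fun t => S j (Function.update x j t)) (by
    filter_upwards [mem_nhdsWithin_of_mem_nhds hev, self_mem_nhdsWithin] with s hs hs2
    rw [S_slice hSdep hScdf hx j hs2] at hs
    exact hs.symm) (hx j)
  refine hfin.congr_deriv ?_
  unfold Dd
  have h1 := (hat_pos hμ hf j x).ne'
  have h2 := (hat_pos hμ hp j (fun i => S i x)).ne'
  have h3 := (hat_pos hμ hp (j+1) (fun i => S i x)).ne'
  field_simp

lemma Dd_prod (hf0 : hatInf μ f 0 = 1) (hp0 : hatInf μ p 0 = 1) (n : ℕ) (x : ℕ → ℝ) :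
    ∏ j ∈ Finset.range n, Dd μ f p S j x =
      hatInf μ f n x / hatInf μ p n (fun i => S i x) := by
  induction n with
  | zero => simp [hf0, hp0]
  | succ n ih =>
    rw [Finset.prod_range_succ, ih, Dd]
    have h1 := (hat_pos hμ hf n x).ne'
    have h2 := (hat_pos hμ hp n (fun i => S i x)).ne'
    have h3 := (hat_pos hμ hp (n+1) (fun i => S i x)).ne'
    field_simp

lemma S_injOn : InjOn (fun x j => S j x) cubeInf := by
  intro x hx y hy hxy
  ext j
  induction j using Nat.strong_induction_on with
  | _ j ih =>
    have h1 := S_slice hSdep hScdf hx j (hx j)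
    have h2 := S_slice hSdep hScdf hy j (hy j)
    rw [Function.update_eq_self] at h1 h2
    have hxy' : (fun j => S j x) = (fun j => S j y) := hxy
    rw [hxy', show S j x = S j y from congrFun hxy j, h2, Gc_dep (y := x) fun i hi => (ih i hi).symm] at h1
    exact ((Gc_mono hμ hf j x).injective h1).symm

include hSmem in
lemma S_surjOn : SurjOn (fun x j => S j x) cubeInf cubeInf := by
  intro y hy
  let K : ℕ → Set (ℕ → ℝ) := fun n => cubeInf ∩ {x | ∀ i < n, S i x = y i}
  have hcl : ∀ n, IsClosed (K n) := by
    intro n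
    refine cube_compact.isClosed.inter ?_
    have : {x : ℕ → ℝ | ∀ i < n, S i x = y i} = ⋂ i, ⋂ (_ : i < n), {x | S i x = y i} := by
      ext; simp
    rw [this]
    exact isClosed_iInter fun i => isClosed_iInter fun _ =>
      isClosed_eq (S_cont hμ hf hp hScdf i) continuous_const
  have hne : ∀ n, (K n).Nonempty := by
    intro n
    induction n with
    | zero => exact ⟨y, hy, fun i hi => absurd hi (by omega)⟩
    | succ n ih =>
      obtain ⟨x, hx, hxy⟩ := ih
      have hmem : Gc μ p n (fun i => S i x) (y n) ∈ Icc (Gc μ f n x (-1)) (Gc μ f n x 1) := by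
        have e1 : Gc μ f n x (-1) = Gc μ p n (fun i => S i x) (-1) := by rw [Gc_neg, Gc_neg]
        have e2 : Gc μ f n x 1 = Gc μ p n (fun i => S i x) 1 := by
          rw [Gc_one hμ hf, Gc_one hμ hp]
        rw [e1, e2]
        exact ⟨(Gc_mono hμ hp _ _).monotone (hy n).1, (Gc_mono hμ hp _ _).monotone (hy n).2⟩
      obtain ⟨s, hs, hs2⟩ := intermediate_value_Icc (by norm_num : (-1 : ℝ) ≤ 1)
        (f := Gc μ f n x) (fun s _ => (Gc_deriv hμ hf n x s).hasDerivAt.continuousAt.continuousWithinAt) hmem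
      refine ⟨Function.update x n s, upd_mem hx n hs, fun i hi => ?_⟩
      rcases Nat.lt_succ_iff_lt_or_eq.1 hi with h | h
      · rw [← hxy i h]
        exact hSdep i _ _ fun k hk => upd_lt s (by omega)
      · subst h
        apply (Gc_mono hμ hp i (fun i => S i x)).injective
        rw [S_slice hSdep hScdf hx i hs, hs2]
  obtain ⟨x, hx⟩ := IsCompact.nonempty_iInter_of_sequence_nonempty_isCompact_isClosed K
    (fun n x hx => ⟨hx.1, fun i hi => hx.2 i (by omega)⟩) hne
    (by simpa [K] using cube_compact) hcl
  rw [mem_iInter] at hx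
  refine ⟨x, (hx 0).1, ?_⟩
  ext j
  exact (hx (j+1)).2 j (by omega)

lemma push_fin (hf0 : hatInf μ f 0 = 1) (hp0 : hatInf μ p 0 = 1) (n : ℕ) :
    ∀ (h : (ℕ → ℝ) → ℝ) (C : ℝ), Continuous h → (∀ x, |h x| ≤ C) →
      (∀ x y : ℕ → ℝ, (∀ i < n, x i = y i) → h x = h y) →
      ∫ x, h (fun i => S i x) * hatInf μ f n x ∂μ = ∫ y, h y * hatInf μ p n y ∂μ := by
  have hprob := hμ.1
  have hSc := S_contAll hμ hf hp hScdf
  induction n with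
  | zero =>
    intro h C _ _ hdep
    rw [hf0, hp0]
    have : ∀ x, h x = h 0 := fun x => hdep x 0 (by simp)
    congr 1
    ext x
    rw [this, this x]
  | succ n ih =>
    intro h C hc hC hdep
    have hC0 : 0 ≤ C := (abs_nonneg _).trans (hC 0)
    have hM0 : 0 ≤ M' := (abs_nonneg _).trans (hat_abs hμ hp 0 0)
    set w : (ℕ → ℝ) → ℝ := fun y => h y * hatInf μ p (n+1) y with hw
    have hwc : Continuous w := hc.mul (hat_cont hμ hp _)
    have hwb : ∀ y, |w y| ≤ C * M' := fun y => by
      rw [hw, abs_mul]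
      exact mul_le_mul (hC y) (hat_abs hμ hp _ _) (abs_nonneg _) hC0
    set k : (ℕ → ℝ) → ℝ := fun y =>
      (∫ u, w (Function.update y n u) ∂mu1) / hatInf μ p n y with hk
    have hkc : Continuous k := by
      refine Continuous.div ?_ (hat_cont hμ hp n) (fun y => (hat_pos hμ hp _ _).ne')
      refine continuous_of_dominated (bound := fun _ => C * M') ?_ ?_ (integrable_const _) ?_
      · intro x
        apply Continuous.aestronglyMeasurable
        exact hwc.comp (by fun_prop)
      · intro x; exact Eventually.of_forall fun t => hwb _
      · refine Eventually.of_forall fun t => ?_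
        exact hwc.comp (by fun_prop)
    have hkb : ∀ y, |k y| ≤ C * M' / m' := by
      intro y
      rw [hk, abs_div, abs_of_pos (hat_pos hμ hp n y)]
      have h1 : |∫ u, w (Function.update y n u) ∂mu1| ≤ C * M' := by
        have := norm_integral_le_of_norm_le_const (μ := mu1) (C := C * M')
          (f := fun u => w (Function.update y n u)) (Eventually.of_forall fun u => hwb _)
        simpa using this
      exact div_le_div₀ (mul_nonneg hC0 hM0) h1 hp.mpos (hat_lo hμ hp _ _)
    have hkd : ∀ x y : ℕ → ℝ, (∀ i < n, x i = y i) → k x = k y := by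
      intro x y hxy
      simp only [hk, hw]
      rw [hat_dep n hxy]
      congr 2
      ext u
      rw [hdep _ _ (upd_dep hxy u), hat_dep _ (upd_dep hxy u)]
    have hrhs : ∫ y, k y * hatInf μ p n y ∂μ = ∫ y, w y ∂μ := by
      rw [← int_update hμ n hwc hwb]
      congr 1
      ext y
      exact div_mul_cancel₀ _ (hat_pos hμ hp n y).ne'
    rw [← hrhs, ← ih k _ hkc hkb hkd]
    rw [← int_update hμ n (g := fun x => h (fun i => S i x) * hatInf μ f (n+1) x)
      ((hc.comp hSc).mul (hat_cont hμ hf _)) (C := C * M) (fun y => by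
        rw [abs_mul]
        exact mul_le_mul (hC _) (hat_abs hμ hf _ _) (abs_nonneg _) hC0)]
    refine integral_congr_ae ?_
    filter_upwards [ae_cube hμ] with x hx
    -- one-dimensional change of variables
    have hSu : ∀ s, hatInf μ p n (fun i => S i (Function.update x n s)) =
        hatInf μ p n (fun i => S i x) := fun s =>
      hat_dep n fun i hi => hSdep i _ _ fun k hk => upd_lt s (by omega)
    have hfu : ∀ s, hatInf μ f n (Function.update x n s) = hatInf μ f n x := fun s =>
      hat_dep n fun i hi => upd_lt s hi
    have hup : ∀ s, ∀ i < n + 1, S i (Function.update x n s) =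
        Function.update (fun i => S i x) n (S n (Function.update x n s)) i := by
      intro s i hi
      by_cases hin : i = n
      · subst hin; simp
      · simp only [ne_eq, hin, not_false_eq_true, Function.update_of_ne]
        exact hSdep i _ _ fun k hk => upd_lt s (by omega)
    have hsub : ∫ s in (-1 : ℝ)..1,
        ((fun u => w (Function.update (fun i => S i x) n u)) ∘
          (fun s => S n (Function.update x n s))) s * Dd μ f p S n (Function.update x n s) =
        ∫ u in S n (Function.update x n (-1))..S n (Function.update x n 1),
          w (Function.update (fun i => S i x) n u) := by
      apply intervalIntegral.integral_comp_mul_deriv''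
      · apply Continuous.continuousOn
        exact (S_cont hμ hf hp hScdf n).comp (by fun_prop)
      · intro s hs
        have hs' : s ∈ Ioo (-1 : ℝ) 1 := by simpa using hs
        have := S_deriv hμ hf hp hSdep hScdf (upd_mem hx n (Ioo_subset_Icc_self hs')) n
        simp only [Function.update_idem, Function.update_self] at this
        exact (this.hasDerivAt (Icc_mem_nhds hs'.1 hs'.2)).hasDerivWithinAt
      · apply Continuous.continuousOn
        unfold Dd
        have hu : Continuous (fun s : ℝ => Function.update x n s) := by fun_prop
        refine Continuous.mul (Continuous.div ?_ ?_ ?_) (Continuous.div ?_ ?_ ?_)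
        · exact (hat_cont hμ hf _).comp hu
        · exact (hat_cont hμ hf _).comp hu
        · exact fun s => (hat_pos hμ hf _ _).ne'
        · exact (hat_cont hμ hp _).comp (hSc.comp hu)
        · exact (hat_cont hμ hp _).comp (hSc.comp hu)
        · exact fun s => (hat_pos hμ hp _ _).ne'
      · apply Continuous.continuousOn
        exact hwc.comp (by fun_prop)
    rw [S_neg hμ hf hp hSdep hScdf hx, S_one hμ hf hp hSdep hScdf hx] at hsub
    simp only [hk]
    rw [int_mu1, int_mu1, ← hsub]
    have hpt : ∀ s, h (fun i => S i (Function.update x n s)) *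
        hatInf μ f (n+1) (Function.update x n s) =
        (hatInf μ f n x / hatInf μ p n (fun i => S i x)) *
        (((fun u => w (Function.update (fun i => S i x) n u)) ∘
          (fun s => S n (Function.update x n s))) s * Dd μ f p S n (Function.update x n s)) := by
      intro s
      simp only [Function.comp, hw, Dd, hSu, hfu]
      rw [hdep _ _ (hup s), hat_dep _ (hup s)]
      have h1 := (hat_pos hμ hf n x).ne'
      have h2 := (hat_pos hμ hp n (fun i => S i x)).ne'
      have h3 := (hat_pos hμ hp (n+1)
        (Function.update (fun i => S i x) n (S n (Function.update x n s)))).ne'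
      field_simp
    simp_rw [hpt]
    rw [intervalIntegral.integral_const_mul]
    ring

lemma push_all (hf0 : hatInf μ f 0 = 1) (hp0 : hatInf μ p 0 = 1)
    (h : (ℕ → ℝ) → ℝ) (C : ℝ) (hc : Continuous h) (hC : ∀ x, |h x| ≤ C) :
    ∫ x, h (fun i => S i x) * f x ∂μ = ∫ y, h y * p y ∂μ := by
  have hprob := hμ.1
  have hSc := S_contAll hμ hf hp hScdf
  have hC0 : 0 ≤ C := (abs_nonneg _).trans (hC 0)
  let r : ℕ → (ℕ → ℝ) → (ℕ → ℝ) := fun n x i => if i < n then x i else 0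
  have hrc : ∀ n, Continuous (r n) := fun n => (cont_splice n).comp (Continuous.prodMk_left 0)
  have hrt : ∀ x, Tendsto (fun n => r n x) atTop (𝓝 x) := by
    intro x
    rw [tendsto_pi_nhds]
    intro i
    apply tendsto_const_nhds.congr'
    filter_upwards [eventually_gt_atTop i] with n hn
    simp [r, hn]
  have h1 : Tendsto (fun n => ∫ x, h (r n (fun i => S i x)) * hatInf μ f n x ∂μ) atTop
      (𝓝 (∫ x, h (fun i => S i x) * f x ∂μ)) := by
    refine tendsto_integral_of_dominated_convergence (fun _ => C * M) ?_ (integrable_const _) ?_ ?_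
    · intro n
      exact ((hc.comp ((hrc n).comp hSc)).mul (hat_cont hμ hf n)).aestronglyMeasurable
    · intro n
      refine Eventually.of_forall fun x => ?_
      rw [norm_mul]
      exact mul_le_mul (hC _) (hat_abs hμ hf _ _) (abs_nonneg _) hC0
    · refine Eventually.of_forall fun x => ?_
      exact ((hc.tendsto _).comp (hrt _)).mul ((hat_unif hμ hf).tendsto_at x)
  have h2 : Tendsto (fun n => ∫ x, h (r n x) * hatInf μ p n x ∂μ) atTop
      (𝓝 (∫ x, h x * p x ∂μ)) := by
    refine tendsto_integral_of_dominated_convergence (fun _ => C * M') ?_ (integrable_const _) ?_ ?_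
    · intro n
      exact ((hc.comp (hrc n)).mul (hat_cont hμ hp n)).aestronglyMeasurable
    · intro n
      refine Eventually.of_forall fun x => ?_
      rw [norm_mul]
      exact mul_le_mul (hC _) (hat_abs hμ hp _ _) (abs_nonneg _) hC0
    · refine Eventually.of_forall fun x => ?_
      exact ((hc.tendsto _).comp (hrt _)).mul ((hat_unif hμ hp).tendsto_at x)
  refine tendsto_nhds_unique h1 (h2.congr fun n => ?_)
  refine (push_fin hμ hf hp hSdep hScdf hf0 hp0 n (fun x => h (r n x)) C (hc.comp (hrc n))
    (fun x => hC _) ?_).symm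
  intro x y hxy
  congr 1
  ext i
  simp only [r]
  split_ifs with hi
  · exact hxy i hi
  · rfl

lemma push_meas (hf0 : hatInf μ f 0 = 1) (hp0 : hatInf μ p 0 = 1) :
    Measure.map (fun x (j : ℕ) => S j x) (μ.withDensity fun x => ENNReal.ofReal (f x)) =
      μ.withDensity (fun x => ENNReal.ofReal (p x)) := by
  have hprob := hμ.1
  have hSc := S_contAll hμ hf hp hScdf
  have key : ∀ {q : (ℕ → ℝ) → ℝ} {a b : ℝ}, KNice q a b →
      IsFiniteMeasure (μ.withDensity fun x => ENNReal.ofReal (q x)) := by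
    intro q a b hq
    apply isFiniteMeasure_withDensity_ofReal
    refine (Integrable.of_bound (C := b) hq.uc.continuous.aestronglyMeasurable
      (Eventually.of_forall fun x => hq.abs x)).2
  have key2 : ∀ {q : (ℕ → ℝ) → ℝ} {a b : ℝ}, KNice q a b → ∀ g : (ℕ → ℝ) → ℝ,
      ∫ x, g x ∂(μ.withDensity fun x => ENNReal.ofReal (q x)) = ∫ x, g x * q x ∂μ := by
    intro q a b hq g
    rw [integral_withDensity_eq_integral_toReal_smul
      hq.uc.continuous.measurable.ennreal_ofReal (by simp)]
    congr 1
    ext x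
    rw [ENNReal.toReal_ofReal (hq.mpos.le.trans (hq.lo x)), smul_eq_mul, mul_comm]
  have i1 := key hf
  have i2 := key hp
  apply ext_of_forall_integral_eq_of_IsFiniteMeasure
  intro h
  rw [integral_map hSc.measurable.aemeasurable h.continuous.aestronglyMeasurable,
    key2 hf, key2 hp]
  exact push_all hμ hf hp hSdep hScdf hf0 hp0 h ‖h‖ h.continuous (fun x => h.norm_coe_le_norm x)

lemma S_unif : TendstoUniformly
    (fun n x => hatInf μ f n x / hatInf μ p n (fun i => S i x))
    (fun x => f x / p (fun i => S i x)) atTop := by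
  have h1 := hat_unif hμ hf
  have h2 := hat_unif hμ hp
  rw [Metric.tendstoUniformly_iff] at h1 h2 ⊢
  intro ε hε
  have hm := hp.mpos
  have hM0 : 0 ≤ M := (abs_nonneg _).trans (hf.abs 0)
  have hM0' : 0 < M' := hm.trans_le ((hp.lo 0).trans (hp.hi 0))
  set δ := ε * m' ^ 2 / (M + M') with hδ
  have hδ0 : 0 < δ := by positivity
  filter_upwards [h1 δ hδ0, h2 δ hδ0] with n hn1 hn2 x
  have a1 := hn1 x
  have a2 := hn2 (fun i => S i x)
  rw [Real.dist_eq] at a1 a2 ⊢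
  set a := f x
  set b := p (fun i => S i x) with hb
  set a' := hatInf μ f n x
  set b' := hatInf μ p n (fun i => S i x) with hb'
  have hbm : m' ≤ b := hp.lo _
  have hbm' : m' ≤ b' := hat_lo hμ hp _ _
  have hb0 : 0 < b := hm.trans_le hbm
  have hb0' : 0 < b' := hm.trans_le hbm'
  have e : a / b - a' / b' = ((a - a') * b' - a' * (b - b')) / (b * b') := by
    field_simp; ring
  rw [e, abs_div, abs_of_pos (mul_pos hb0 hb0'), div_lt_iff₀ (mul_pos hb0 hb0')]
  have hA : |a'| ≤ M := hat_abs hμ hf _ _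
  have hB : |b'| ≤ M' := hat_abs hμ hp _ _
  calc |(a - a') * b' - a' * (b - b')| ≤ |(a - a') * b'| + |a' * (b - b')| := abs_sub _ _
    _ = |a - a'| * |b'| + |a'| * |b - b'| := by rw [abs_mul, abs_mul]
    _ < δ * M' + M * δ := by
      have t1 : |a - a'| * |b'| < δ * M' :=
        mul_lt_mul a1 hB (abs_pos.2 hb0'.ne') hδ0.le
      have t2 : |a'| * |b - b'| ≤ M * δ :=
        mul_le_mul hA a2.le (abs_nonneg _) hM0
      linarith
    _ = ε * m' ^ 2 := by rw [hδ]; field_simp; ring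
    _ ≤ ε * (b * b') := by
      apply mul_le_mul_of_nonneg_left _ hε.le
      nlinarith

omit hμ hf hp hScdf hSdep

lemma clamp_uc : UniformContinuous clampU := by
  rw [uniformContinuous_pi]
  intro i
  have h1 : UniformContinuous (fun t : ℝ => max (-1) (min 1 t)) := by
    have : LipschitzWith 1 (fun t : ℝ => max (-1) (min 1 t)) :=
      (LipschitzWith.id.const_min 1).const_max (-1)
    exact this.uniformContinuous
  exact h1.comp (Pi.uniformContinuous_proj _ i)

lemma nice_clamp (hfc : ContinuousOn f cubeInf) (hfpos : ∀ x ∈ cubeInf, 0 < f x) :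
    ∃ m M, KNice (fun x => f (clampU x)) m M := by
  have hne : cubeInf.Nonempty := ⟨_, clamp_mem 0⟩
  obtain ⟨a, ha, ha2⟩ := cube_compact.exists_isMinOn hne hfc
  obtain ⟨b, hb, hb2⟩ := cube_compact.exists_isMaxOn hne hfc
  refine ⟨f a, f b, ?_, hfpos a ha, fun x => ha2 (clamp_mem x), fun x => hb2 (clamp_mem x)⟩
  have h1 := cube_compact.uniformContinuousOn_of_continuous hfc
  have h2 : Tendsto (fun q : (ℕ → ℝ) × (ℕ → ℝ) => (clampU q.1, clampU q.2))
      (uniformity (ℕ → ℝ)) (uniformity (ℕ → ℝ) ⊓ 𝓟 (cubeInf ×ˢ cubeInf)) := by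
    rw [tendsto_inf]
    refine ⟨clamp_uc, tendsto_principal.2 (Eventually.of_forall fun q => ?_)⟩
    exact ⟨clamp_mem _, clamp_mem _⟩
  exact Tendsto.comp h1 h2

include hμ
lemma hat_clamp (k : ℕ) {x : ℕ → ℝ} (hx : x ∈ cubeInf) :
    hatInf μ (fun x => f (clampU x)) k x = hatInf μ f k x := by
  unfold hatInf
  refine integral_congr_ae ?_
  filter_upwards [ae_cube hμ] with t ht
  have : (fun i => if i < k then x i else t i) ∈ cubeInf := by
    intro i
    dsimp only
    split_ifs
    · exact hx i
    · exact ht i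
  rw [clamp_eq this]

lemma hat_zero (h : ∫ x, f x ∂μ = 1) : hatInf μ (fun x => f (clampU x)) 0 = 1 := by
  ext x
  rw [hat_dep 0 (y := clampU 0) (by simp), hat_clamp hμ 0 (clamp_mem 0)]
  simpa [hatInf] using h

lemma FCDF_clamp (j : ℕ) {x : ℕ → ℝ} (hx : x ∈ cubeInf) :
    FCDFInf μ (fun x => f (clampU x)) j x = FCDFInf μ f j x := by
  unfold FCDFInf
  rw [hat_clamp hμ j hx]
  congr 1
  refine setIntegral_congr_fun measurableSet_Icc fun t ht => ?_
  exact hat_clamp hμ (j+1) (upd_mem hx j ⟨ht.1, ht.2.trans (hx j).2⟩)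

end KR

/-- the Knothe–Rosenblatt transport on `U = [-1,1]^ℕ`.
The transport `T = (T_j)` is characterized by: `T_j` maps `U` into `[-1,1]`, depends only
on the first `j+1` coordinates, and `F_{π;j}((T_i x)_i) = F_{ρ;j}(x)`.  Then `T : U → U`
is bijective and measurable with `T_♯ρ = π`, and the partial products
`∏_{j<n} ∂_{x_j}T_j` converge uniformly to a continuous positive `det dT` with
`f_π(T(x))·det dT(x) = f_ρ(x)` on `U`. -/
theorem stmt15 (μ : Measure (ℕ → ℝ)) (hμ : IsProductOfMu1 μ)
    (fρ fπ : (ℕ → ℝ) → ℝ)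
    (hρc : ContinuousOn fρ cubeInf) (hπc : ContinuousOn fπ cubeInf)
    (hρpos : ∀ x ∈ cubeInf, 0 < fρ x) (hπpos : ∀ x ∈ cubeInf, 0 < fπ x)
    (hρprob : ∫ x, fρ x ∂μ = 1) (hπprob : ∫ x, fπ x ∂μ = 1)
    (T : ℕ → (ℕ → ℝ) → ℝ)
    (hTmem : ∀ j : ℕ, ∀ x ∈ cubeInf, T j x ∈ Set.Icc (-1 : ℝ) 1)
    (hTdep : ∀ j : ℕ, ∀ x y : ℕ → ℝ, (∀ i ≤ j, x i = y i) → T j x = T j y)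
    (hTcdf : ∀ j : ℕ, ∀ x ∈ cubeInf,
      FCDFInf μ fπ j (fun i => T i x) = FCDFInf μ fρ j x) :
    -- (1) `T` is bijective, measurable, and pushes `ρ` forward to `π`
    Set.BijOn (fun x (j : ℕ) => T j x) cubeInf cubeInf ∧
    Measurable (cubeInf.restrict fun x (j : ℕ) => T j x) ∧
    Measure.map (fun x (j : ℕ) => T j x)
        (μ.withDensity fun x => ENNReal.ofReal (fρ x)) =
      μ.withDensity (fun x => ENNReal.ofReal (fπ x)) ∧
    -- (2) uniform convergence of `∏_{j<n} ∂_{x_j}T_j` to a continuous positive `det dT`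
    ∃ g : (ℕ → ℝ) → ℝ,
      ContinuousOn g cubeInf ∧ (∀ x ∈ cubeInf, 0 < g x) ∧
      TendstoUniformlyOn (fun n x => ∏ j ∈ Finset.range n, pdInf T j x) g atTop cubeInf ∧
      ∀ x ∈ cubeInf, fπ (fun j => T j x) * g x = fρ x := by
  have hprob := hμ.1
  obtain ⟨m, M, hf⟩ := nice_clamp hρc hρpos
  obtain ⟨m', M', hp⟩ := nice_clamp hπc hπpos
  set f' : (ℕ → ℝ) → ℝ := fun x => fρ (clampU x) with hf'
  set p' : (ℕ → ℝ) → ℝ := fun x => fπ (clampU x) with hp'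
  set S : ℕ → (ℕ → ℝ) → ℝ := fun j x => T j (clampU x) with hS
  have hSmem : ∀ j : ℕ, ∀ x, S j x ∈ Icc (-1 : ℝ) 1 := fun j x => hTmem j _ (clamp_mem x)
  have hSdep : ∀ j : ℕ, ∀ x y : ℕ → ℝ, (∀ i ≤ j, x i = y i) → S j x = S j y := by
    intro j x y hxy
    refine hTdep j _ _ fun i hi => ?_
    simp only [clampU, hxy i hi]
  have hScdf : ∀ j : ℕ, ∀ x,
      Gc μ p' j (fun i => S i x) (S j x) = Gc μ f' j (clampU x) (clampU x j) := by
    intro j x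
    have h := hTcdf j (clampU x) (clamp_mem x)
    rw [← FCDF_clamp hμ j (clamp_mem x),
      ← FCDF_clamp hμ j (x := fun i => T i (clampU x)) (fun i => hSmem i x),
      FCDF_eq j _ (clamp_mem x j), FCDF_eq j _ (hSmem j x)] at h
    exact h
  have hf0 : hatInf μ f' 0 = 1 := hat_zero hμ hρprob
  have hp0 : hatInf μ p' 0 = 1 := hat_zero hμ hπprob
  have hST : ∀ x ∈ cubeInf, (fun j => S j x) = fun j => T j x := by
    intro x hx
    ext j
    simp only [hS, clamp_eq hx]
  have hSc : Continuous (fun x j => S j x) := S_contAll hμ hf hp hScdf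
  have hae := ae_cube hμ
  have hdf : (μ.withDensity fun x => ENNReal.ofReal (fρ x)) =
      μ.withDensity fun x => ENNReal.ofReal (f' x) := by
    refine withDensity_congr_ae ?_
    filter_upwards [hae] with x hx
    simp only [hf', clamp_eq hx]
  have hdp : (μ.withDensity fun x => ENNReal.ofReal (fπ x)) =
      μ.withDensity fun x => ENNReal.ofReal (p' x) := by
    refine withDensity_congr_ae ?_
    filter_upwards [hae] with x hx
    simp only [hp', clamp_eq hx]
  have hTc : ∀ x ∈ cubeInf, (fun j => T j x) ∈ cubeInf := fun x hx j => hTmem j x hx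
  refine ⟨?_, ?_, ?_, ?_⟩
  · have hb : BijOn (fun x j => S j x) cubeInf cubeInf :=
      ⟨fun x _ j => hSmem j x, S_injOn hμ hf hp hSdep hScdf,
        S_surjOn hμ hf hp hSmem hSdep hScdf⟩
    exact hb.congr hST
  · have : cubeInf.restrict (fun x (j : ℕ) => T j x) =
        fun x : cubeInf => (fun j => S j x.1) := by
      ext x j
      exact (congrFun (hST x.1 x.2) j).symm
    rw [this]
    exact hSc.measurable.comp measurable_subtype_coe
  · rw [hdf, hdp, ← push_meas hμ hf hp hSdep hScdf hf0 hp0]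
    refine Measure.map_congr ?_
    have : ∀ᵐ x ∂(μ.withDensity fun x => ENNReal.ofReal (f' x)), x ∈ cubeInf :=
      (withDensity_absolutelyContinuous _ _).ae_le hae
    filter_upwards [this] with x hx
    exact (hST x hx).symm
  · refine ⟨fun x => f' x / p' (fun i => S i x), ?_, ?_, ?_, ?_⟩
    · apply Continuous.continuousOn
      exact hf.uc.continuous.div (hp.uc.continuous.comp hSc)
        (fun x => (hp.mpos.trans_le (hp.lo _)).ne')
    · exact fun x _ => div_pos (hf.mpos.trans_le (hf.lo _)) (hp.mpos.trans_le (hp.lo _))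
    · refine (S_unif hμ hf hp hSdep hScdf).tendstoUniformlyOn.congr ?_
      refine Eventually.of_forall fun n x hx => ?_
      dsimp only
      rw [← Dd_prod hμ hf hp hSdep hScdf hf0 hp0]
      refine Finset.prod_congr rfl fun j _ => ?_
      have hd := (S_deriv hμ hf hp hSdep hScdf hx j).derivWithin
        (uniqueDiffOn_Icc (by norm_num : (-1 : ℝ) < 1) _ (hx j))
      rw [← hd, pdInf]
      refine derivWithin_congr (fun t ht => ?_) ?_
      · exact congrFun (hST _ (upd_mem hx j ht)) j
      · exact congrFun (hST _ (upd_mem hx j (hx j))) j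
    · intro x hx
      have e1 : f' x = fρ x := by simp only [hf', clamp_eq hx]
      have e2 : p' (fun i => S i x) = fπ (fun j => T j x) := by
        rw [hST x hx]; simp only [hp', clamp_eq (hTc x hx)]
      dsimp only
      rw [e1, e2]
      exact mul_div_cancel₀ _ (hπpos _ (hTc x hx)).ne'
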